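/- Let n ≥ 1 and 0 < α < 1. There exists a sequence of centered probability measures μ_k on ℝⁿ with finite second moments such that δ_Tal(μ_k) → 0, W_1(μ_k, γ) → 0 with W_1(μ_k, γ) > 0 for all k, and δ_Tal(μ_k) / W_1(μ_k, γ)^α → 0 as k → ∞. Hence the exponent 1 in the known stability bound δ_Tal(μ) ≥ C·min{W_1(μ,γ), W_1(μ,γ)²} cannot be replaced by any α < 1. -/

import Mathlib

/-!
Perturb the Gaussian linearly: `f = 1 + ε h`, where `h = (cos x₁ - c) / 2` and `c` is the Gaussian
mean of `cos x₁`. The function `h` is even, has Gaussian mean zero and satisfies `|h| ≤ 1`, so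
`f dγ` is a centered probability measure for `0 ≤ ε ≤ 1`. As `ε → 0`:

* `|H| ≤ 2 ε`, from `f - 1 ≤ f log f ≤ f (f - 1)` (`abs_relEnt_le`);
* `W₁ ≤ C ε` and `W₂² ≤ C ε`, since leaving the fraction `1 - ε` of the mass in place and coupling
  the remaining part `(1 + h) dγ` independently with `γ` is an admissible plan (`cost_le`);
* `W₁ ≥ ε v` with `v > 0`, by testing against the `1`-Lipschitz function `cos x₁`, for which
  `∫ cos x₁ · h dγ` is half the variance of `cos x₁` (`le_cost`, `integral_cos_mul_bump_pos`).

Hence `|δ_Tal| ≤ (4 + C) ε` while `W₁` is of exact order `ε`, and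
`|δ_Tal| / W₁^α = O(ε^(1-α))` tends to `0`. No sign information on the deficit is needed.
-/


open MeasureTheory Filter Real Topology

noncomputable section

/-- Euclidean space `ℝⁿ`. -/
abbrev En (n : ℕ) := EuclideanSpace ℝ (Fin n)

/-- The standard Gaussian measure `dγ = (2π)^{-n/2} e^{-|x|²/2} dx` on `ℝⁿ`. -/
def stdGauss (n : ℕ) : Measure (En n) :=
  (volume : Measure (En n)).withDensity
    (fun x => ENNReal.ofReal ((2 * π) ^ (-(n : ℝ) / 2) * Real.exp (-‖x‖ ^ 2 / 2)))

/-- The probability measure `dμ = f dγ` with density `f` with respect to the Gaussian. -/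
def densMeasure {n : ℕ} (f : En n → ℝ) : Measure (En n) :=
  (stdGauss n).withDensity (fun x => ENNReal.ofReal (f x))

/-- Relative entropy `H(μ) = ∫ f log f dγ` of `dμ = f dγ`. -/
def relEnt {n : ℕ} (f : En n → ℝ) : ℝ :=
  ∫ x, f x * Real.log (f x) ∂(stdGauss n)

/-- Fisher information `I(μ) = ∫ |∇f|²/f dγ` of `dμ = f dγ`. -/
def fisherInfo {n : ℕ} (f : En n → ℝ) : ℝ :=
  ∫ x, ‖gradient f x‖ ^ 2 / f x ∂(stdGauss n)

/-- Deficit of the logarithmic Sobolev inequality, `δ(μ) = I(μ)/2 − H(μ)`. -/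
def lsiDeficit {n : ℕ} (f : En n → ℝ) : ℝ :=
  fisherInfo f / 2 - relEnt f

/-- The `p`-th moment `m_p(μ) = ∫ |x|^p dμ`. -/
def moment {n : ℕ} (p : ℝ) (μ : Measure (En n)) : ℝ := ∫ x, ‖x‖ ^ p ∂μ

/-- A measure is centered if `∫ x dμ = 0`. -/
def IsCentered {n : ℕ} (μ : Measure (En n)) : Prop := (∫ x, x ∂μ) = 0

/-- `π'` is a coupling of `μ` and `ν`. -/
def IsCoupling {n : ℕ} (π' : Measure (En n × En n)) (μ ν : Measure (En n)) : Prop :=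
  IsProbabilityMeasure π' ∧ π'.map Prod.fst = μ ∧ π'.map Prod.snd = ν

/-- Wasserstein distance of order `p`:
`W_p(μ,ν) = inf_π (∫∫ |x−y|^p dπ)^{1/p}` over couplings `π`. -/
def wasserstein {n : ℕ} (p : ℝ) (μ ν : Measure (En n)) : ℝ :=
  ((⨅ (π' : Measure (En n × En n)) (_ : IsCoupling π' μ ν),
      ∫⁻ z, ENNReal.ofReal (‖z.1 - z.2‖ ^ p) ∂π') ^ (1 / p)).toReal

/-- Deficit of Talagrand's inequality, `δ_Tal(μ) = 2H(μ) − W₂²(μ,γ)` for `dμ = f dγ`. -/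
def talDeficit {n : ℕ} (f : En n → ℝ) : ℝ :=
  2 * relEnt f - wasserstein 2 (densMeasure f) (stdGauss n) ^ 2

/-- The `L^p(dμ)` norm of a real function. -/
def LpNorm {n : ℕ} (p : ℝ) (μ : Measure (En n)) (u : En n → ℝ) : ℝ :=
  (∫ x, |u x| ^ p ∂μ) ^ (1 / p)

/-! ### The Gaussian measure -/

lemma integrable_exp_neg_sq (n : ℕ) {b : ℝ} (hb : 0 < b) :
    Integrable (fun x : En n => Real.exp (-b * ‖x‖ ^ 2)) := by
  apply Integrable.of_integral_ne_zero
  rw [GaussianFourier.integral_rexp_neg_mul_sq_norm hb]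
  positivity

lemma measurable_gaussDens (n : ℕ) : Measurable
    (fun x : En n => ENNReal.ofReal ((2 * π) ^ (-(n : ℝ) / 2) * Real.exp (-‖x‖ ^ 2 / 2))) := by
  fun_prop

instance isProbabilityMeasure_stdGauss (n : ℕ) : IsProbabilityMeasure (stdGauss n) := by
  constructor
  have hint := integrable_exp_neg_sq n (b := 1 / 2) (by norm_num)
  have hval := GaussianFourier.integral_rexp_neg_mul_sq_norm (V := En n) (b := 1 / 2) (by norm_num)
  have hfun : (fun x : En n => Real.exp (-‖x‖ ^ 2 / 2))
      = fun x => Real.exp (-(1 / 2) * ‖x‖ ^ 2) := by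
    ext x; congr 1; ring
  rw [stdGauss, withDensity_apply _ MeasurableSet.univ, Measure.restrict_univ,
    ← ofReal_integral_eq_lintegral_ofReal]
  · rw [integral_const_mul, hfun, hval, finrank_euclideanSpace, Fintype.card_fin,
      show π / (1 / 2) = 2 * π by ring, ← Real.rpow_add (by positivity),
      show -(n : ℝ) / 2 + n / 2 = 0 by ring, Real.rpow_zero, ENNReal.ofReal_one]
  · exact (hfun ▸ hint).const_mul _
  · exact Eventually.of_forall fun x => by positivity

lemma integral_stdGauss {E : Type*} [NormedAddCommGroup E] [NormedSpace ℝ E] {n : ℕ}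
    (u : En n → E) : ∫ x, u x ∂(stdGauss n)
      = ∫ x, ((2 * π) ^ (-(n : ℝ) / 2) * Real.exp (-‖x‖ ^ 2 / 2)) • u x := by
  rw [stdGauss, integral_withDensity_eq_integral_toReal_smul (measurable_gaussDens n)
    (Eventually.of_forall fun x => ENNReal.ofReal_lt_top)]
  congr 1
  ext x
  rw [ENNReal.toReal_ofReal (by positivity)]

lemma integrable_sq_stdGauss (n : ℕ) : Integrable (fun x : En n => ‖x‖ ^ 2) (stdGauss n) := by
  rw [stdGauss, integrable_withDensity_iff (measurable_gaussDens n)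
    (Eventually.of_forall fun x => ENNReal.ofReal_lt_top)]
  -- `t ≤ 4 exp (t / 4)` absorbs the square into half of the Gaussian exponent.
  refine ((integrable_exp_neg_sq n (b := 1 / 4) (by norm_num)).const_mul
    (4 * (2 * π) ^ (-(n : ℝ) / 2))).mono' (by fun_prop) (Eventually.of_forall fun x => ?_)
  rw [ENNReal.toReal_ofReal (by positivity), Real.norm_of_nonneg (by positivity)]
  have h1 : ‖x‖ ^ 2 ≤ 4 * Real.exp (‖x‖ ^ 2 / 4) := by
    have := Real.add_one_le_exp (‖x‖ ^ 2 / 4)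
    linarith
  have h2 : Real.exp (-(1 / 4) * ‖x‖ ^ 2)
      = Real.exp (‖x‖ ^ 2 / 4) * Real.exp (-‖x‖ ^ 2 / 2) := by
    rw [← Real.exp_add]; congr 1; ring
  rw [h2]
  have h3 : 0 ≤ (2 * π) ^ (-(n : ℝ) / 2) * Real.exp (-‖x‖ ^ 2 / 2) := by positivity
  nlinarith [mul_le_mul_of_nonneg_right h1 h3]

/-- The Gaussian measure charges every nonempty open set. -/
lemma isOpenPosMeasure_stdGauss (n : ℕ) : (stdGauss n).IsOpenPosMeasure := by
  have : (volume : Measure (En n)) ≪ stdGauss n := by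
    apply withDensity_absolutelyContinuous' (measurable_gaussDens n).aemeasurable
    refine Eventually.of_forall fun x => ?_
    rw [ne_eq, ENNReal.ofReal_eq_zero, not_le]
    positivity
  exact this.isOpenPosMeasure

/-! ### Linear perturbations of the Gaussian density -/

section Perturb

variable {n : ℕ} {h : En n → ℝ} {ε : ℝ}

lemma integral_densMeasure {E : Type*} [NormedAddCommGroup E] [NormedSpace ℝ E]
    {f : En n → ℝ} (hf : Measurable f) (hf0 : ∀ x, 0 ≤ f x) (u : En n → E) :
    ∫ x, u x ∂(densMeasure f) = ∫ x, f x • u x ∂(stdGauss n) := by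
  rw [densMeasure, integral_withDensity_eq_integral_toReal_smul (by fun_prop)
    (Eventually.of_forall fun x => ENNReal.ofReal_lt_top)]
  congr 1
  ext x
  rw [ENNReal.toReal_ofReal (hf0 x)]

lemma integrable_bdd (hm : Measurable h) (hb : ∀ x, |h x| ≤ 1) : Integrable h (stdGauss n) :=
  Integrable.of_bound hm.aestronglyMeasurable 1 (Eventually.of_forall hb)

lemma perturb_nonneg (hb : ∀ x, |h x| ≤ 1) (h0 : 0 ≤ ε) (h1 : ε ≤ 1) (x : En n) :
    0 ≤ 1 + ε * h x := by
  have := abs_le.1 (hb x)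
  nlinarith

lemma isProbabilityMeasure_perturb (hm : Measurable h) (hb : ∀ x, |h x| ≤ 1)
    (hz : ∫ x, h x ∂(stdGauss n) = 0) (h0 : 0 ≤ ε) (h1 : ε ≤ 1) :
    IsProbabilityMeasure (densMeasure fun x => 1 + ε * h x) := by
  constructor
  have hi := (integrable_bdd hm hb).const_mul ε
  have hI : Integrable (fun x => 1 + ε * h x) (stdGauss n) := (integrable_const _).add hi
  rw [densMeasure, withDensity_apply _ MeasurableSet.univ, Measure.restrict_univ,
    ← ofReal_integral_eq_lintegral_ofReal hI
      (Eventually.of_forall (perturb_nonneg hb h0 h1)),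
    integral_add (integrable_const _) hi, integral_const_mul, hz]
  simp

lemma integrable_sq_perturb (hm : Measurable h) (hb : ∀ x, |h x| ≤ 1) (h0 : 0 ≤ ε) (h1 : ε ≤ 1) :
    Integrable (fun x => ‖x‖ ^ 2) (densMeasure fun x => 1 + ε * h x) := by
  rw [densMeasure, integrable_withDensity_iff (by fun_prop)
    (Eventually.of_forall fun x => ENNReal.ofReal_lt_top)]
  refine ((integrable_sq_stdGauss n).const_mul 2).mono' (by fun_prop)
    (Eventually.of_forall fun x => ?_)
  rw [ENNReal.toReal_ofReal (perturb_nonneg hb h0 h1 x),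
    Real.norm_of_nonneg (mul_nonneg (by positivity) (perturb_nonneg hb h0 h1 x))]
  have := abs_le.1 (hb x)
  have : 1 + ε * h x ≤ 2 := by nlinarith
  nlinarith [sq_nonneg ‖x‖]

lemma isCentered_perturb (hm : Measurable h) (hb : ∀ x, |h x| ≤ 1) (he : ∀ x, h (-x) = h x)
    (h0 : 0 ≤ ε) (h1 : ε ≤ 1) : IsCentered (densMeasure fun x => 1 + ε * h x) := by
  rw [IsCentered, integral_densMeasure (by fun_prop) (perturb_nonneg hb h0 h1), integral_stdGauss]
  have : IsAddTorsionFree (En n) := .of_isTorsionFree ℝ (En n)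
  rw [← self_eq_neg, ← integral_neg]
  rw [← integral_neg_eq_self]
  congr 1
  ext1 x
  simp [he]

lemma abs_relEnt_le (hb : ∀ x, |h x| ≤ 1) (h0 : 0 ≤ ε) (h1 : ε ≤ 1) :
    |relEnt (fun x : En n => 1 + ε * h x)| ≤ 2 * ε := by
  have key : ∀ x : En n, ‖(1 + ε * h x) * Real.log (1 + ε * h x)‖ ≤ 2 * ε := by
    intro x
    have hx := abs_le.1 (hb x)
    have hl : -ε ≤ ε * h x := by nlinarith
    have hu : ε * h x ≤ ε := by nlinarith
    rcases (perturb_nonneg hb h0 h1 x).eq_or_lt with hp | hp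
    · rw [← hp]; simpa using h0
    · have hlow : ε * h x ≤ (1 + ε * h x) * Real.log (1 + ε * h x) := by
        have := mul_le_mul_of_nonneg_left (Real.one_sub_inv_le_log_of_pos hp) hp.le
        rw [mul_sub, mul_inv_cancel₀ hp.ne'] at this
        linarith
      have hup : (1 + ε * h x) * Real.log (1 + ε * h x) ≤ (1 + ε * h x) * (ε * h x) := by
        have := Real.log_le_sub_one_of_pos hp
        exact mul_le_mul_of_nonneg_left (by linarith) hp.le
      rw [Real.norm_eq_abs, abs_le]
      constructor
      · linarith
      · refine hup.trans ?_
        rcases le_total 0 (ε * h x) with hs | hs <;> nlinarith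
  have := norm_integral_le_of_norm_le_const (μ := stdGauss n) (Eventually.of_forall key)
  simpa [relEnt] using this

/-! ### Transport costs -/

/-- The optimal cost `inf_π ∫∫ |x-y|^p dπ`, that is `W_p^p`, as an extended nonnegative real. -/
def transportCost (p : ℝ) (μ ν : Measure (En n)) : ENNReal :=
  ⨅ (π' : Measure (En n × En n)) (_ : IsCoupling π' μ ν),
      ∫⁻ z, ENNReal.ofReal (‖z.1 - z.2‖ ^ p) ∂π'

lemma wasserstein_one (μ ν : Measure (En n)) :
    wasserstein 1 μ ν = (transportCost 1 μ ν).toReal := by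
  simp [wasserstein, transportCost]

lemma wasserstein_two_sq (μ ν : Measure (En n)) :
    wasserstein 2 μ ν ^ 2 = (transportCost 2 μ ν).toReal := by
  change ((transportCost 2 μ ν ^ (1 / 2 : ℝ)).toReal) ^ 2 = _
  rw [← ENNReal.toReal_rpow, ← Real.sqrt_eq_rpow, Real.sq_sqrt ENNReal.toReal_nonneg]

/-- The cost of the independent coupling of `(1 + h) dγ` with `γ`. -/
def prodCost (p : ℝ) (h : En n → ℝ) : ENNReal :=
  ∫⁻ z, ENNReal.ofReal (‖z.1 - z.2‖ ^ p) ∂((densMeasure fun x => 1 + h x).prod (stdGauss n))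

lemma prodCost_lt_top (hm : Measurable h) (hb : ∀ x, |h x| ≤ 1)
    (hz : ∫ x, h x ∂(stdGauss n) = 0) {p : ℝ} (hp0 : 0 ≤ p) (hp2 : p ≤ 2) :
    prodCost p h < ⊤ := by
  have hP := isProbabilityMeasure_perturb (ε := 1) hm hb hz zero_le_one le_rfl
  have hS := integrable_sq_perturb (ε := 1) hm hb zero_le_one le_rfl
  simp only [one_mul] at hP hS
  have hI : Integrable (fun z : En n × En n => 1 + (2 * ‖z.1‖ ^ 2 + 2 * ‖z.2‖ ^ 2))
      ((densMeasure fun x => 1 + h x).prod (stdGauss n)) :=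
    (integrable_const _).add ((((hS.comp_fst (stdGauss n))).const_mul 2).add
      (((integrable_sq_stdGauss n).comp_snd _).const_mul 2))
  refine lt_of_le_of_lt (lintegral_mono fun z => ENNReal.ofReal_le_ofReal ?_) hI.lintegral_lt_top
  have ht : ‖z.1 - z.2‖ ^ p ≤ 1 + ‖z.1 - z.2‖ ^ 2 := by
    rcases le_total ‖z.1 - z.2‖ 1 with hle | hle
    · have := Real.rpow_le_one (norm_nonneg _) hle hp0
      nlinarith [sq_nonneg ‖z.1 - z.2‖]
    · have := Real.rpow_le_rpow_of_exponent_le hle hp2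
      rw [Real.rpow_two] at this
      linarith
  have hn : ‖z.1 - z.2‖ ^ 2 ≤ 2 * ‖z.1‖ ^ 2 + 2 * ‖z.2‖ ^ 2 := by
    have := parallelogram_law_with_norm ℝ z.1 z.2
    nlinarith [sq_nonneg ‖z.1 + z.2‖]
  linarith

lemma densMeasure_perturb_eq (hm : Measurable h) (hb : ∀ x, |h x| ≤ 1) (h0 : 0 ≤ ε)
    (h1 : ε ≤ 1) : densMeasure (fun x => 1 + ε * h x)
      = ENNReal.ofReal (1 - ε) • stdGauss n
        + ENNReal.ofReal ε • densMeasure (fun x => 1 + h x) := by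
  ext s hs
  simp only [densMeasure, Measure.add_apply, Measure.smul_apply, withDensity_apply _ hs,
    smul_eq_mul]
  rw [← lintegral_const_mul _ (by fun_prop), ← setLIntegral_const, ← lintegral_add_left (by fun_prop)]
  congr 1
  ext x
  have := abs_le.1 (hb x)
  rw [← ENNReal.ofReal_mul h0, ← ENNReal.ofReal_add (by linarith) (by nlinarith)]
  congr 1
  ring

/-- Leaving the fraction `1 - ε` of the mass in place is an admissible transport plan. -/
lemma cost_le (hm : Measurable h) (hb : ∀ x, |h x| ≤ 1) (hz : ∫ x, h x ∂(stdGauss n) = 0)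
    (h0 : 0 ≤ ε) (h1 : ε ≤ 1) {p : ℝ} (hp : p ≠ 0) :
    transportCost p (densMeasure fun x => 1 + ε * h x) (stdGauss n)
      ≤ ENNReal.ofReal ε * prodCost p h := by
  have hP := isProbabilityMeasure_perturb (ε := 1) hm hb hz zero_le_one le_rfl
  simp only [one_mul] at hP
  have hsum : ENNReal.ofReal (1 - ε) + ENNReal.ofReal ε = 1 := by
    rw [← ENNReal.ofReal_add (by linarith) h0]; simp
  set ν := densMeasure (fun x => 1 + h x) with hν
  have hd : Measurable (fun x : En n => (x, x)) := by fun_prop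
  let P : Measure (En n × En n) := ENNReal.ofReal (1 - ε) • (stdGauss n).map (fun x => (x, x))
    + ENNReal.ofReal ε • ν.prod (stdGauss n)
  have hfst : P.map Prod.fst = densMeasure (fun x => 1 + ε * h x) := by
    rw [densMeasure_perturb_eq hm hb h0 h1, Measure.map_add _ _ measurable_fst, Measure.map_smul,
      Measure.map_smul, Measure.map_map measurable_fst hd, Measure.map_fst_prod]
    have : (Prod.fst ∘ fun x : En n => (x, x)) = id := rfl
    simp [this, hν]
  have hsnd : P.map Prod.snd = stdGauss n := by
    rw [Measure.map_add _ _ measurable_snd, Measure.map_smul,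
      Measure.map_smul, Measure.map_map measurable_snd hd, Measure.map_snd_prod]
    have : (Prod.snd ∘ fun x : En n => (x, x)) = id := rfl
    rw [this, Measure.map_id, measure_univ, one_smul, ← add_smul, hsum, one_smul]
  have hprob : IsProbabilityMeasure P := by
    constructor
    have := measure_univ (μ := stdGauss n)
    rwa [← hsnd, Measure.map_apply measurable_snd MeasurableSet.univ, Set.preimage_univ] at this
  refine (iInf₂_le P ⟨hprob, hfst, hsnd⟩).trans ?_
  rw [lintegral_add_measure, lintegral_smul_measure, lintegral_smul_measure,
    lintegral_map (by fun_prop) hd]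
  simp [Real.zero_rpow hp, prodCost, hν]

/-- Weak Kantorovich–Rubinstein duality: a bounded `1`-Lipschitz function `φ` bounds the `W₁`-cost
from below. -/
lemma le_cost (hm : Measurable h) (hb : ∀ x, |h x| ≤ 1) (h0 : 0 ≤ ε) (h1 : ε ≤ 1)
    {φ : En n → ℝ} (hφm : Measurable φ) (hφb : ∀ x, |φ x| ≤ 1)
    (hφ : ∀ x y, |φ x - φ y| ≤ ‖x - y‖) :
    ENNReal.ofReal (ε * ∫ x, φ x * h x ∂(stdGauss n))
      ≤ transportCost 1 (densMeasure fun x => 1 + ε * h x) (stdGauss n) := by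
  refine le_iInf₂ fun P hP => ?_
  obtain ⟨hprob, hfst, hsnd⟩ := hP
  have hI1 : Integrable (fun z : En n × En n => φ z.1) P :=
    Integrable.of_bound (hφm.comp measurable_fst).aestronglyMeasurable 1
      (Eventually.of_forall fun z => hφb z.1)
  have hI2 : Integrable (fun z : En n × En n => φ z.2) P :=
    Integrable.of_bound (hφm.comp measurable_snd).aestronglyMeasurable 1
      (Eventually.of_forall fun z => hφb z.2)
  have e1 : ∫ z, φ z.1 ∂P = ∫ x, φ x ∂(densMeasure fun x => 1 + ε * h x) := by
    rw [← hfst, integral_map (by fun_prop) hφm.aestronglyMeasurable]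
  have e2 : ∫ z, φ z.2 ∂P = ∫ x, φ x ∂(stdGauss n) := by
    rw [← hsnd, integral_map (by fun_prop) hφm.aestronglyMeasurable]
  have hφI : Integrable φ (stdGauss n) := integrable_bdd hφm hφb
  have hφh : Integrable (fun x => φ x * h x) (stdGauss n) :=
    integrable_bdd (by fun_prop) fun x => by
      rw [abs_mul]; exact mul_le_one₀ (hφb x) (abs_nonneg _) (hb x)
  have key : ∫ z, (φ z.1 - φ z.2) ∂P = ε * ∫ x, φ x * h x ∂(stdGauss n) := by
    rw [integral_sub hI1 hI2, e1, e2,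
      integral_densMeasure (by fun_prop) (perturb_nonneg hb h0 h1), ← integral_sub _ hφI,
      ← integral_const_mul]
    · congr 1; ext x; simp only [smul_eq_mul]; ring
    · have := hφI.add (hφh.const_mul ε)
      refine this.congr (Eventually.of_forall fun x => ?_)
      simp only [Pi.add_apply, smul_eq_mul]; ring
  rw [← key]
  calc ENNReal.ofReal (∫ z, (φ z.1 - φ z.2) ∂P) ≤ ‖∫ z, (φ z.1 - φ z.2) ∂P‖ₑ := by
        rw [Real.enorm_eq_ofReal_abs]; exact ENNReal.ofReal_le_ofReal (le_abs_self _)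
    _ ≤ ∫⁻ z, ‖φ z.1 - φ z.2‖ₑ ∂P := enorm_integral_le_lintegral_enorm _
    _ ≤ _ := by
        refine lintegral_mono fun z => ?_
        rw [Real.enorm_eq_ofReal_abs, Real.rpow_one]
        exact ENNReal.ofReal_le_ofReal (hφ _ _)

end Perturb

/-! ### The cosine perturbation -/

/-- The perturbation `(cos xᵢ - c) / 2`, with `c` the Gaussian mean of `cos xᵢ`. -/
def bump {n : ℕ} (i : Fin n) (x : En n) : ℝ :=
  (Real.cos (x i) - ∫ y : En n, Real.cos (y i) ∂(stdGauss n)) / 2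

section Bump

variable {n : ℕ} (i : Fin n)

lemma continuous_coord_cos : Continuous fun x : En n => Real.cos (x i) := by fun_prop

lemma integrable_coord_cos : Integrable (fun x : En n => Real.cos (x i)) (stdGauss n) :=
  integrable_bdd (continuous_coord_cos i).measurable fun _ => Real.abs_cos_le_one _

lemma measurable_bump : Measurable (bump i) :=
  ((continuous_coord_cos i).measurable.sub_const _).div_const _

lemma abs_bump_le (x : En n) : |bump i x| ≤ 1 := by
  have h1 : |∫ y : En n, Real.cos (y i) ∂(stdGauss n)| ≤ 1 := by
    have := norm_integral_le_of_norm_le_const (μ := stdGauss n) (f := fun y : En n => Real.cos (y i))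
      (C := 1) (Eventually.of_forall fun x => Real.abs_cos_le_one _)
    simpa using this
  have h2 := abs_le.1 (Real.abs_cos_le_one (x i))
  have h1 := abs_le.1 h1
  rw [bump, abs_le]
  constructor <;> linarith

lemma bump_neg (x : En n) : bump i (-x) = bump i x := by simp [bump]

lemma integral_bump : ∫ x, bump i x ∂(stdGauss n) = 0 := by
  simp only [bump]
  rw [integral_div, integral_sub (integrable_coord_cos i) (integrable_const _)]
  simp

lemma abs_cos_sub_le (x y : En n) : |Real.cos (x i) - Real.cos (y i)| ≤ ‖x - y‖ := by
  have h1 : |Real.cos (x i) - Real.cos (y i)| ≤ |x i - y i| := by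
    have := Real.lipschitzWith_cos.dist_le_mul (x i) (y i)
    simpa [Real.dist_eq] using this
  have h2 := PiLp.norm_apply_le (x - y) i
  simpa using h1.trans h2

/-- `∫ cos xᵢ · h dγ` equals `2 ∫ h² dγ`, which is positive because `h` is continuous, not
identically zero, and `γ` charges open sets. -/
lemma integral_cos_mul_bump_pos :
    0 < ∫ x : En n, Real.cos (x i) * bump i x ∂(stdGauss n) := by
  have hop := isOpenPosMeasure_stdGauss n
  set c := ∫ y : En n, Real.cos (y i) ∂(stdGauss n) with hc
  have hcont : Continuous (bump i) := by unfold bump; fun_prop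
  have hbI := integrable_bdd (measurable_bump i) (abs_bump_le i)
  have hsq : Integrable (fun x => bump i x ^ 2) (stdGauss n) :=
    integrable_bdd (hcont.measurable.pow_const 2) fun x => by
      rw [abs_pow]; exact pow_le_one₀ (abs_nonneg _) (abs_bump_le i x)
  have heq : ∫ x : En n, Real.cos (x i) * bump i x ∂(stdGauss n)
      = 2 * ∫ x, bump i x ^ 2 ∂(stdGauss n) := by
    have : (fun x : En n => Real.cos (x i) * bump i x)
        = fun x => 2 * bump i x ^ 2 + c * bump i x := by
      ext x; simp only [bump, ← hc]; ring
    rw [this, integral_add (hsq.const_mul 2) (hbI.const_mul c), integral_const_mul,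
      integral_const_mul, integral_bump]
    ring
  -- The values `cos 0 = 1` and `cos π = -1` cannot both equal `c`.
  obtain ⟨x, hx⟩ : ∃ x, bump i x ≠ 0 := by
    by_contra! hall
    have a := hall 0
    have b := hall (EuclideanSpace.single i π)
    simp only [bump] at a b
    simp at a b
    linarith
  rw [heq]
  refine mul_pos two_pos ?_
  rw [integral_pos_iff_support_of_nonneg (fun y => sq_nonneg _) hsq]
  exact (hcont.pow 2).isOpen_support.measure_pos _ ⟨x, pow_ne_zero 2 hx⟩

end Bump

/-- Sharpness of the exponent `1` in the `W₁`-stability bound for Talagrand's inequality. -/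
theorem talagrand_sharp_exponent_W1 (n : ℕ) (hn : 1 ≤ n) (α : ℝ) (hα0 : 0 < α) (hα1 : α < 1) :
    ∃ f : ℕ → En n → ℝ,
      (∀ k x, 0 ≤ f k x) ∧
      (∀ k, IsProbabilityMeasure (densMeasure (f k))) ∧
      (∀ k, IsCentered (densMeasure (f k))) ∧
      (∀ k, Integrable (fun x => ‖x‖ ^ (2 : ℝ)) (densMeasure (f k))) ∧
      Tendsto (fun k => talDeficit (f k)) atTop (𝓝 0) ∧
      Tendsto (fun k => wasserstein 1 (densMeasure (f k)) (stdGauss n)) atTop (𝓝 0) ∧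
      (∀ k, 0 < wasserstein 1 (densMeasure (f k)) (stdGauss n)) ∧
      Tendsto (fun k => talDeficit (f k) /
          wasserstein 1 (densMeasure (f k)) (stdGauss n) ^ α) atTop (𝓝 0) := by
  have i : Fin n := ⟨0, hn⟩
  have hm := measurable_bump i
  have hb := abs_bump_le i
  have hz := integral_bump i
  let ε : ℕ → ℝ := fun k => 1 / ((k : ℝ) + 1)
  have hε : ∀ k, 0 < ε k := fun k => by positivity
  have hε1 : ∀ k, ε k ≤ 1 := fun k => by
    have : (0 : ℝ) ≤ k := k.cast_nonneg
    exact (div_le_one (by positivity)).2 (by linarith)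
  have hεlim : Tendsto ε atTop (𝓝 0) := tendsto_one_div_add_atTop_nhds_zero_nat
  set v := ∫ x : En n, Real.cos (x i) * bump i x ∂(stdGauss n) with hv
  have hvpos : 0 < v := integral_cos_mul_bump_pos i
  have hC1 := (prodCost_lt_top hm hb hz zero_le_one one_le_two).ne
  have hC2 := (prodCost_lt_top hm hb hz zero_le_two le_rfl).ne
  set C1 := (prodCost 1 (bump i)).toReal
  set C2 := (prodCost 2 (bump i)).toReal
  have up1 := fun k => cost_le hm hb hz (hε k).le (hε1 k) (one_ne_zero (α := ℝ))
  have up2 := fun k => cost_le hm hb hz (hε k).le (hε1 k) (two_ne_zero (α := ℝ))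
  have W1le : ∀ k, wasserstein 1 (densMeasure fun x => 1 + ε k * bump i x) (stdGauss n)
      ≤ ε k * C1 := fun k => by
    rw [wasserstein_one]
    have := ENNReal.toReal_mono (ENNReal.mul_ne_top ENNReal.ofReal_ne_top hC1) (up1 k)
    rwa [ENNReal.toReal_mul, ENNReal.toReal_ofReal (hε k).le] at this
  have W2le : ∀ k, wasserstein 2 (densMeasure fun x => 1 + ε k * bump i x) (stdGauss n) ^ 2
      ≤ ε k * C2 := fun k => by
    rw [wasserstein_two_sq]
    have := ENNReal.toReal_mono (ENNReal.mul_ne_top ENNReal.ofReal_ne_top hC2) (up2 k)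
    rwa [ENNReal.toReal_mul, ENNReal.toReal_ofReal (hε k).le] at this
  have leW1 : ∀ k, ε k * v
      ≤ wasserstein 1 (densMeasure fun x => 1 + ε k * bump i x) (stdGauss n) := fun k => by
    rw [wasserstein_one]
    refine (ENNReal.ofReal_le_iff_le_toReal ?_).1 (le_cost hm hb (hε k).le (hε1 k)
      (continuous_coord_cos i).measurable (fun x => Real.abs_cos_le_one _) (abs_cos_sub_le i))
    exact ne_top_of_le_ne_top (ENNReal.mul_ne_top ENNReal.ofReal_ne_top hC1) (up1 k)
  have W1pos : ∀ k, 0 < wasserstein 1 (densMeasure fun x => 1 + ε k * bump i x) (stdGauss n) :=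
    fun k => (mul_pos (hε k) hvpos).trans_le (leW1 k)
  have hδ : ∀ k, |talDeficit fun x => 1 + ε k * bump i x| ≤ ε k * (4 + C2) := fun k => by
    have h1 := abs_le.1 (abs_relEnt_le (n := n) hb (hε k).le (hε1 k))
    have h2 := W2le k
    have h3 := sq_nonneg (wasserstein 2 (densMeasure fun x => 1 + ε k * bump i x) (stdGauss n))
    rw [talDeficit, abs_le]
    constructor <;> nlinarith
  refine ⟨fun k x => 1 + ε k * bump i x, fun k => perturb_nonneg hb (hε k).le (hε1 k),
    fun k => isProbabilityMeasure_perturb hm hb hz (hε k).le (hε1 k),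
    fun k => isCentered_perturb hm hb (bump_neg i) (hε k).le (hε1 k),
    fun k => ?_, ?_, ?_, W1pos, ?_⟩
  · simp only [Real.rpow_two]
    exact integrable_sq_perturb hm hb (hε k).le (hε1 k)
  · refine squeeze_zero_norm hδ ?_
    simpa using hεlim.mul_const (4 + C2)
  · refine squeeze_zero (fun k => (W1pos k).le) W1le ?_
    simpa using hεlim.mul_const C1
  · have hlim : Tendsto (fun k => ε k ^ (1 - α) * ((4 + C2) / v ^ α)) atTop (𝓝 0) := by
      have := (hεlim.rpow_const (p := 1 - α) (Or.inr (by linarith))).mul_const ((4 + C2) / v ^ α)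
      rwa [Real.zero_rpow (by linarith), zero_mul] at this
    refine squeeze_zero_norm (fun k => ?_) hlim
    have hW := Real.rpow_pos_of_pos (W1pos k) α
    rw [norm_div, Real.norm_eq_abs, Real.norm_of_nonneg hW.le]
    calc _ ≤ (ε k * (4 + C2)) / (ε k * v) ^ α := by
          have hp := mul_pos (hε k) hvpos
          have := Real.rpow_le_rpow hp.le (leW1 k) hα0.le
          have h4 := (abs_nonneg _).trans (hδ k)
          exact div_le_div₀ h4 (hδ k) (Real.rpow_pos_of_pos hp α) this
      _ = _ := by
          rw [Real.mul_rpow (hε k).le hvpos.le, Real.rpow_sub (hε k), Real.rpow_one]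
          ring
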